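/- arXiv:2104.07729 — 2 statements merged into one kernel-verified Lean document; each statement's English description precedes it below -/
import Mathlib

section
/- Let k ≥ 2 be an integer. For all sufficiently large n, if G is an n-vertex W_{2k+1}-free simple graph attaining the maximum spectral radius among all n-vertex W_{2k+1}-free graphs, then λ₁(G) > (n + k − 1)/2. -/
/-- The wheel graph on `t` vertices: vertex `0` joined to every vertex of the
cycle `1, 2, …, t-1` (with `t-1` adjacent to `1`). -/
def wheelGraph (t : ℕ) : SimpleGraph (Fin t) where
  Adj a b := a ≠ b ∧ (a.val = 0 ∨ b.val = 0 ∨ a.val + 1 = b.val ∨ b.val + 1 = a.val ∨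
      (a.val = 1 ∧ b.val = t - 1) ∨ (b.val = 1 ∧ a.val = t - 1))
  symm := by
    refine ⟨?_⟩
    intro a b h
    exact ⟨h.1.symm, by tauto⟩
  loopless := by
    refine ⟨?_⟩
    intro a h
    exact h.1 rfl

/-- `G` contains a copy of `F`, i.e. a subgraph isomorphic to `F`. -/
def ContainsCopy {α β : Type*} (F : SimpleGraph α) (G : SimpleGraph β) : Prop :=
  ∃ f : α ↪ β, ∀ a b, F.Adj a b → G.Adj (f a) (f b)

/-- `G` is `W_t`-free: it contains no subgraph isomorphic to the wheel on `t` vertices. -/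
def WheelFree (t : ℕ) {n : ℕ} (G : SimpleGraph (Fin n)) : Prop :=
  ¬ ContainsCopy (wheelGraph t) G

/-- The spectral radius of `G`: the largest eigenvalue of its adjacency matrix. -/
noncomputable def lam1 {n : ℕ} (G : SimpleGraph (Fin n)) : ℝ := by
  classical
  exact sSup {μ : ℝ | Module.End.HasEigenvalue (Matrix.toLin' (G.adjMatrix ℝ)) μ}

/-- The number of edges of a graph on a finite vertex type. -/
noncomputable def edgeCount {V : Type*} [Fintype V] (G : SimpleGraph V) : ℕ := by
  classical
  exact G.edgeFinset.card

/-- The degree of a vertex. -/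
noncomputable def deg {n : ℕ} (G : SimpleGraph (Fin n)) (v : Fin n) : ℕ := by
  classical
  exact G.degree v

/-- The number of neighbours of `v` inside the set `A`. -/
noncomputable def degIn {n : ℕ} (G : SimpleGraph (Fin n)) (A : Finset (Fin n)) (v : Fin n) : ℕ := by
  classical
  exact (A.filter fun u => G.Adj v u).card

/-- The number of edges of `G` with one endpoint in `S` and the other outside `S`. -/
noncomputable def cutCount {n : ℕ} (G : SimpleGraph (Fin n)) (S : Finset (Fin n)) : ℕ := by
  classical
  exact ((Finset.univ : Finset (Fin n × Fin n)).filter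
    fun p => G.Adj p.1 p.2 ∧ p.1 ∈ S ∧ p.2 ∉ S).card

/-- `(S, T)` is a maximum cut of `G`. -/
def IsMaxCut {n : ℕ} (G : SimpleGraph (Fin n)) (S T : Finset (Fin n)) : Prop :=
  T = Sᶜ ∧ ∀ S' : Finset (Fin n), cutCount G S' ≤ cutCount G S

/-- `G` attains the maximum spectral radius among all `n`-vertex `W_t`-free graphs. -/
def IsSpexWheel (t : ℕ) {n : ℕ} (G : SimpleGraph (Fin n)) : Prop :=
  WheelFree t G ∧ ∀ H : SimpleGraph (Fin n), WheelFree t H → lam1 H ≤ lam1 G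

/-- `G` attains the maximum number of edges among all `n`-vertex `W_t`-free graphs. -/
def IsExWheel (t : ℕ) {n : ℕ} (G : SimpleGraph (Fin n)) : Prop :=
  WheelFree t G ∧ ∀ H : SimpleGraph (Fin n), WheelFree t H → edgeCount H ≤ edgeCount G

open Finset in
/-- Rayleigh bound with the all-ones vector. -/
lemma lam1_mul_ge {n : ℕ} (G : SimpleGraph (Fin n)) [DecidableRel G.Adj] :
    (∑ u, ∑ v, if G.Adj u v then (1 : ℝ) else 0) ≤ lam1 G * n := by
  classical
  set A : Matrix (Fin n) (Fin n) ℝ := G.adjMatrix ℝ with hA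
  have hbdd : BddAbove {μ : ℝ | Module.End.HasEigenvalue (Matrix.toLin' A) μ} :=
    (Module.End.finite_hasEigenvalue (Matrix.toLin' A)).bddAbove
  have hl : lam1 G = sSup {μ : ℝ | Module.End.HasEigenvalue (Matrix.toLin' A) μ} := by
    unfold lam1
    simp only [hA]
    congr!
  have hAs : A.IsHermitian := by
    rw [Matrix.IsHermitian, Matrix.conjTranspose_eq_transpose_of_trivial]
    exact SimpleGraph.transpose_adjMatrix G
  have hM : (lam1 G • (1 : Matrix (Fin n) (Fin n) ℝ) - A).IsHermitian := by
    refine Matrix.IsHermitian.sub ?_ hAs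
    rw [Matrix.IsHermitian, Matrix.conjTranspose_eq_transpose_of_trivial]
    simp
  have hpsd : (lam1 G • (1 : Matrix (Fin n) (Fin n) ℝ) - A).PosSemidef := by
    rw [hM.posSemidef_iff_eigenvalues_nonneg]
    intro i
    have hv := hM.mulVec_eigenvectorBasis i
    set w : Fin n → ℝ := ⇑(hM.eigenvectorBasis i) with hw
    have hne : w ≠ 0 := by
      intro h0
      have := hM.eigenvectorBasis.orthonormal.ne_zero i
      apply this
      ext x
      exact congrFun h0 x
    have hev : Module.End.HasEigenvalue (Matrix.toLin' A) (lam1 G - hM.eigenvalues i) := by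
      apply Module.End.hasEigenvalue_of_hasEigenvector (x := w)
      refine ⟨?_, hne⟩
      rw [Module.End.mem_eigenspace_iff, Matrix.toLin'_apply, sub_smul, ← hv, Matrix.sub_mulVec,
        Matrix.smul_mulVec, Matrix.one_mulVec]
      abel
    have := le_csSup hbdd hev
    rw [← hl] at this
    simpa using this
  have h1 := hpsd.dotProduct_mulVec_nonneg (fun _ => (1 : ℝ))
  have h2 : (star (fun _ : Fin n => (1 : ℝ))) ⬝ᵥ
      ((lam1 G • (1 : Matrix (Fin n) (Fin n) ℝ) - A).mulVec (fun _ => (1 : ℝ)))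
      = lam1 G * n - ∑ u, ∑ v, if G.Adj u v then (1 : ℝ) else 0 := by
    rw [Matrix.sub_mulVec, Matrix.smul_mulVec, Matrix.one_mulVec, dotProduct_sub]
    congr 1
    · simp [dotProduct, mul_comm]
    · simp only [dotProduct, Matrix.mulVec, hA, SimpleGraph.adjMatrix_apply]
      simp
  rw [h2] at h1
  linarith

/-- Unpack a copy of the wheel as a hub and a periodic closed walk. -/
lemma wheel_unpack {V : Type*} (G : SimpleGraph V) (k : ℕ) (hk : 2 ≤ k)
    (h : ContainsCopy (wheelGraph (2 * k + 1)) G) :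
    ∃ (c : V) (g : ℕ → V), (∀ i, G.Adj c (g i)) ∧ (∀ i, G.Adj (g i) (g (i + 1))) ∧
      (∀ i j, g i = g j → i % (2 * k) = j % (2 * k)) := by
  obtain ⟨f, hf⟩ := h
  have hlt : ∀ i, i % (2 * k) < 2 * k := fun i => Nat.mod_lt _ (by omega)
  refine ⟨f ⟨0, by omega⟩, fun i => f ⟨1 + i % (2 * k), by have := hlt i; omega⟩, ?_, ?_, ?_⟩
  · intro i
    apply hf
    refine ⟨?_, Or.inl rfl⟩
    intro h
    have := congrArg Fin.val h
    simp at this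
    omega
  · intro i
    apply hf
    have h1 := hlt i
    have h2 : (i + 1) % (2 * k) = if i % (2 * k) + 1 = 2 * k then 0 else i % (2 * k) + 1 := by
      rw [Nat.add_mod, Nat.mod_eq_of_lt (show 1 < 2 * k by omega)]
      split_ifs with h
      · rw [h, Nat.mod_self]
      · exact Nat.mod_eq_of_lt (by omega)
    simp only [wheelGraph, ne_eq, Fin.mk.injEq]
    rw [h2]
    split_ifs with h <;> constructor <;> omega
  · intro i j hij
    have := f.injective hij
    simp only [Fin.mk.injEq] at this
    omega

/-- The join of `H` with an (almost) independent set on `Fin b` containing the single edge `01`. -/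
def joinGraph {L : Type*} (H : SimpleGraph L) (b : ℕ) : SimpleGraph (L ⊕ Fin b) where
  Adj x y := match x, y with
    | Sum.inl u, Sum.inl v => H.Adj u v
    | Sum.inl _, Sum.inr _ => True
    | Sum.inr _, Sum.inl _ => True
    | Sum.inr i, Sum.inr j => (i.val = 0 ∧ j.val = 1) ∨ (i.val = 1 ∧ j.val = 0)
  symm := by
    refine ⟨?_⟩
    rintro (u | i) (v | j) h
    · exact H.adj_symm h
    · trivial
    · trivial
    · simp only at h ⊢
      omega
  loopless := by
    refine ⟨?_⟩
    rintro (u | i) h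
    · exact H.loopless.irrefl u h
    · simp only at h
      omega

/-- Pigeonhole: pairs of consecutive indices starting at parity `e`. -/
lemma pair_exists (k e : ℕ) (P : ℕ → Prop) [DecidablePred P]
    (hcard : ∀ S : Finset ℕ, (∀ i ∈ S, P i) →
      (∀ i ∈ S, ∀ j ∈ S, i % (2 * k) = j % (2 * k) → i = j) → S.card + 1 ≤ k) :
    ∃ i < k, ¬ P (2 * i + e) ∧ ¬ P (2 * i + e + 1) := by
  by_contra hcon
  push Not at hcon
  have key : ∀ i < k, ¬ P (2 * i + e) → P (2 * i + e + 1) := hcon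
  let φ : ℕ → ℕ := fun i => if P (2 * i + e) then 2 * i + e else 2 * i + e + 1
  have hφ : ∀ i, φ i = 2 * i + e ∨ φ i = 2 * i + e + 1 := by
    intro i
    simp only [φ]
    split_ifs <;> simp
  have hinj : ∀ i < k, ∀ j < k, φ i % (2 * k) = φ j % (2 * k) → i = j := by
    have main : ∀ i j, i ≤ j → j < k → φ i % (2 * k) = φ j % (2 * k) → i = j := by
      intro i j hij hj h
      have h3 : φ i ≤ φ j := by
        rcases eq_or_lt_of_le hij with h | h
        · rw [h]
        · rcases hφ i with h1 | h1 <;> rcases hφ j with h2 | h2 <;> omega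
      have hd : 2 * k ∣ φ j - φ i := (Nat.modEq_iff_dvd' h3).1 h
      have hlt : φ j - φ i < 2 * k := by
        rcases hφ i with h1 | h1 <;> rcases hφ j with h2 | h2 <;> omega
      have := Nat.eq_zero_of_dvd_of_lt hd hlt
      rcases hφ i with h1 | h1 <;> rcases hφ j with h2 | h2 <;> omega
    intro i hi j hj h
    rcases le_total i j with hij | hij
    · exact main i j hij hj h
    · exact (main j i hij hi h.symm).symm
  have hc := hcard ((Finset.range k).image φ) (by
      intro x hx
      obtain ⟨i, hi, rfl⟩ := Finset.mem_image.1 hx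
      simp only [φ]
      split_ifs with h
      · exact h
      · exact key i (Finset.mem_range.1 hi) h) (by
      intro x hx y hy hxy
      obtain ⟨i, hi, rfl⟩ := Finset.mem_image.1 hx
      obtain ⟨j, hj, rfl⟩ := Finset.mem_image.1 hy
      rw [hinj i (Finset.mem_range.1 hi) j (Finset.mem_range.1 hj) hxy])
  rw [Finset.card_image_of_injOn, Finset.card_range] at hc
  · omega
  · intro i hi j hj h
    simp only [Finset.coe_range, Set.mem_Iio] at hi hj
    exact hinj i hi j hj (by rw [h])

lemma joinGraph_free {L Λ : Type*} [Fintype L] [DecidableEq L] (H : SimpleGraph L)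
    [DecidableRel H.Adj] [DecidableEq Λ]
    (lab : L → Λ) (k b : ℕ) (hk : 2 ≤ k)
    (hdeg : ∀ u, (Finset.univ.filter fun v => H.Adj u v).card = k - 1)
    (hlab : ∀ u v, H.Adj u v → lab u = lab v)
    (hsize : ∀ l, (Finset.univ.filter fun v => lab v = l).card ≤ 2 * k - 2) :
    ¬ ContainsCopy (wheelGraph (2 * k + 1)) (joinGraph H b) := by
  intro hcopy
  obtain ⟨c, g, hc, hg, hinj⟩ := wheel_unpack _ k hk hcopy
  rcases c with u | r
  · -- hub in `L`
    classical
    have hcard : ∀ S : Finset ℕ, (∀ i ∈ S, (g i).isLeft = true) →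
        (∀ i ∈ S, ∀ j ∈ S, i % (2 * k) = j % (2 * k) → i = j) → S.card + 1 ≤ k := by
      intro S hS hSi
      have hle : S.card ≤ ((Finset.univ.filter fun v => H.Adj u v).image
          (Sum.inl : L → L ⊕ Fin b)).card := by
        apply Finset.card_le_card_of_injOn g
        · intro i hi
          have h1 := hS i hi
          have h2 := hc i
          rcases hgi : g i with v | r
          · rw [hgi] at h2
            have h3 : H.Adj u v := h2
            simp [h3]
          · rw [hgi] at h1
            simp at h1
        · intro i hi j hj hij
          exact hSi i hi j hj (hinj i j hij)
      have := hle.trans Finset.card_image_le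
      rw [hdeg] at this
      omega
    obtain ⟨i, hi, hi1, hi2⟩ := pair_exists k 0 (fun i => (g i).isLeft = true) hcard
    obtain ⟨j, hj, hj1, hj2⟩ := pair_exists k 1 (fun i => (g i).isLeft = true) hcard
    have edge : ∀ m, ¬ (g m).isLeft = true → ¬ (g (m + 1)).isLeft = true →
        ∃ x y : Fin b, g m = Sum.inr x ∧ g (m + 1) = Sum.inr y ∧
          ((x.val = 0 ∧ y.val = 1) ∨ (x.val = 1 ∧ y.val = 0)) := by
      intro m h1 h2
      have h3 := hg m
      rcases hgm : g m with v | x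
      · simp [hgm] at h1
      · rcases hgm' : g (m + 1) with v | y
        · simp [hgm'] at h2
        · rw [hgm, hgm'] at h3
          exact ⟨x, y, rfl, rfl, h3⟩
    obtain ⟨x, y, hx, hy, hxy⟩ := edge _ hi1 hi2
    obtain ⟨x', y', hx', hy', hxy'⟩ := edge _ hj1 hj2
    have hmod2 : ∀ p q : ℕ, p % (2 * k) = q % (2 * k) → p % 2 = q % 2 := by
      intro p q h
      exact Nat.ModEq.of_mul_right k h
    have hmod : ∀ p, p ≤ 2 * k → p % (2 * k) = if p = 2 * k then 0 else p := by
      intro p hp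
      split_ifs with h
      · rw [h, Nat.mod_self]
      · exact Nat.mod_eq_of_lt (by omega)
    have hcases : (x = x' ∧ y = y') ∨ (x = y' ∧ y = x') := by
      simp only [Fin.ext_iff]
      omega
    rcases hcases with ⟨h1, h2⟩ | ⟨h1, h2⟩
    · have := hmod2 _ _ (hinj _ _ (hx.trans ((congrArg Sum.inr h1).trans hx'.symm)))
      omega
    · have e1 := hinj _ _ (hx.trans ((congrArg Sum.inr h1).trans hy'.symm))
      have e2 := hinj _ _ (hy.trans ((congrArg Sum.inr h2).trans hx'.symm))
      rw [hmod _ (by omega), hmod _ (by omega)] at e1 e2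
      split_ifs at e1 e2 <;> omega
  · -- hub in `R`
    have hone : ∀ i j, ¬ (g i).isLeft = true → ¬ (g j).isLeft = true →
        i % (2 * k) = j % (2 * k) := by
      intro i j h1 h2
      have h3 := hc i
      have h4 := hc j
      rcases hgi : g i with v | x
      · simp [hgi] at h1
      · rcases hgj : g j with v | y
        · simp [hgj] at h2
        · rw [hgi] at h3
          rw [hgj] at h4
          simp only [joinGraph] at h3 h4
          apply hinj
          rw [hgi, hgj]
          congr 1
          ext
          omega
    obtain ⟨i0, hi0⟩ : ∃ i0, ∀ i, i % (2 * k) ≠ i0 % (2 * k) → (g i).isLeft = true := by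
      by_cases h : ∃ i0, ¬ (g i0).isLeft = true
      · obtain ⟨i0, h0⟩ := h
        refine ⟨i0, fun i hi => ?_⟩
        by_contra hcon
        exact hi (hone _ _ hcon h0)
      · push Not at h
        exact ⟨0, fun i _ => h i⟩
    have hL : ∀ t, t < 2 * k - 1 → ∃ v, g (i0 + 1 + t) = Sum.inl v := by
      intro t ht
      have : (g (i0 + 1 + t)).isLeft = true := by
        apply hi0
        intro h
        have hd := (Nat.modEq_iff_dvd' (show i0 ≤ i0 + 1 + t by omega)).1 h.symm
        have := Nat.eq_zero_of_dvd_of_lt hd (by omega)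
        omega
      exact Sum.isLeft_iff.1 this
    obtain ⟨v0, hv0⟩ := hL 0 (by omega)
    have hconst : ∀ t, t < 2 * k - 1 → ∃ v, g (i0 + 1 + t) = Sum.inl v ∧ lab v = lab v0 := by
      intro t
      induction t with
      | zero => exact fun _ => ⟨v0, hv0, rfl⟩
      | succ t ih =>
        intro ht
        obtain ⟨v, hv, hvl⟩ := ih (by omega)
        obtain ⟨w, hw⟩ := hL (t + 1) ht
        refine ⟨w, hw, ?_⟩
        have h := hg (i0 + 1 + t)
        rw [show i0 + 1 + t + 1 = i0 + 1 + (t + 1) by ring, hv, hw] at h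
        have h' : H.Adj v w := h
        rw [← hlab v w h', hvl]
    have hle : (Finset.range (2 * k - 1)).card ≤
        ((Finset.univ.filter fun v => lab v = lab v0).image (Sum.inl : L → L ⊕ Fin b)).card := by
      apply Finset.card_le_card_of_injOn (fun t => g (i0 + 1 + t))
      · intro t ht
        obtain ⟨v, hv, hvl⟩ := hconst t (by simpa using ht)
        simp [hv, hvl]
      · intro s hs t ht hst
        have hs' : s < 2 * k - 1 := by simpa using hs
        have ht' : t < 2 * k - 1 := by simpa using ht
        have h1 : s % (2 * k) = t % (2 * k) :=
          Nat.ModEq.add_left_cancel' (i0 + 1) (hinj _ _ hst)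
        rwa [Nat.mod_eq_of_lt (by omega), Nat.mod_eq_of_lt (by omega)] at h1
    have h1 := hle.trans (Finset.card_image_le.trans (hsize _))
    rw [Finset.card_range] at h1
    omega

/-- Disjoint copies of `K_k` and of `K_{k-1,k-1}`. -/
def compGraph (p q k : ℕ) : SimpleGraph ((Fin p × Fin k) ⊕ (Fin q × (Fin (k - 1) × Bool))) where
  Adj x y := match x, y with
    | Sum.inl u, Sum.inl v => u.1 = v.1 ∧ u.2 ≠ v.2
    | Sum.inl _, Sum.inr _ => False
    | Sum.inr _, Sum.inl _ => False
    | Sum.inr u, Sum.inr v => u.1 = v.1 ∧ u.2.2 ≠ v.2.2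
  symm := by
    refine ⟨?_⟩
    rintro (u | i) (v | j) h
    · exact ⟨h.1.symm, h.2.symm⟩
    · exact h
    · exact h
    · exact ⟨h.1.symm, h.2.symm⟩
  loopless := by
    refine ⟨?_⟩
    rintro (u | i) h
    · exact h.2 rfl
    · exact h.2 rfl

/-- The component label. -/
def compLab (p q k : ℕ) : ((Fin p × Fin k) ⊕ (Fin q × (Fin (k - 1) × Bool))) → Fin p ⊕ Fin q
  | Sum.inl u => Sum.inl u.1
  | Sum.inr u => Sum.inr u.1

lemma compGraph_deg (p q k : ℕ) [DecidableRel (compGraph p q k).Adj] (u) :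
    (Finset.univ.filter fun v => (compGraph p q k).Adj u v).card = k - 1 := by
  classical
  rcases u with ⟨i, x⟩ | ⟨i, x, c⟩
  · have : (Finset.univ.filter fun v => (compGraph p q k).Adj (Sum.inl (i, x)) v) =
        (Finset.univ.erase x).image (fun y => Sum.inl (i, y)) := by
      ext v
      rcases v with ⟨j, y⟩ | ⟨j, y, d⟩
      · rw [Finset.mem_filter]
        simp only [compGraph, Finset.mem_univ, true_and, Finset.mem_image, Finset.mem_erase,
          Sum.inl.injEq, Prod.mk.injEq]
        constructor
        · rintro ⟨h1, h2⟩
          exact ⟨y, ⟨fun h => h2 h.symm, trivial⟩, h1, rfl⟩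
        · rintro ⟨z, ⟨h1, -⟩, h2, rfl⟩
          exact ⟨h2, fun h => h1 h.symm⟩
      · rw [Finset.mem_filter]
        simp [compGraph]
    rw [this, Finset.card_image_of_injective, Finset.card_erase_of_mem (Finset.mem_univ _)]
    · simp
    · intro a b h
      simpa using h
  · have : (Finset.univ.filter fun v => (compGraph p q k).Adj (Sum.inr (i, x, c)) v) =
        (Finset.univ).image (fun y => Sum.inr (i, y, !c)) := by
      ext v
      rcases v with ⟨j, y⟩ | ⟨j, y, d⟩
      · rw [Finset.mem_filter]
        simp [compGraph]
      · rw [Finset.mem_filter]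
        simp only [compGraph, Finset.mem_univ, true_and, Finset.mem_image,
          Sum.inr.injEq, Prod.mk.injEq]
        constructor
        · rintro ⟨h1, h2⟩
          refine ⟨y, h1, rfl, ?_⟩
          cases c <;> cases d <;> simp_all
        · rintro ⟨z, h1, rfl, h2⟩
          refine ⟨h1, ?_⟩
          cases c <;> cases d <;> simp_all
    rw [this, Finset.card_image_of_injective]
    · simp
    · intro a b h
      simpa using h

lemma compLab_size (p q k : ℕ) (hk : 2 ≤ k) (l) :
    (Finset.univ.filter fun v => compLab p q k v = l).card ≤ 2 * k - 2 := by
  classical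
  rcases l with i | i
  · have : (Finset.univ.filter fun v => compLab p q k v = Sum.inl i) ⊆
        (Finset.univ).image (fun y => Sum.inl (i, y)) := by
      intro v hv
      rcases v with ⟨j, y⟩ | ⟨j, y⟩
      · replace hv := (Finset.mem_filter.1 hv).2
        simp [compLab] at hv
        simp [hv]
      · replace hv := (Finset.mem_filter.1 hv).2
        simp [compLab] at hv
    have := (Finset.card_le_card this).trans Finset.card_image_le
    simp at this
    omega
  · have : (Finset.univ.filter fun v => compLab p q k v = Sum.inr i) ⊆
        (Finset.univ).image (fun y => Sum.inr (i, y)) := by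
      intro v hv
      rcases v with ⟨j, y⟩ | ⟨j, y⟩
      · replace hv := (Finset.mem_filter.1 hv).2
        simp [compLab] at hv
      · replace hv := (Finset.mem_filter.1 hv).2
        simp [compLab] at hv
        simp [hv]
    have := (Finset.card_le_card this).trans Finset.card_image_le
    simp at this
    omega

lemma joinGraph_sum {L : Type*} [Fintype L] (H : SimpleGraph L) (b k : ℕ) (hb : 2 ≤ b)
    [DecidableRel H.Adj] [DecidableRel (joinGraph H b).Adj]
    (hdeg : ∀ u, (Finset.univ.filter fun v => H.Adj u v).card = k - 1) :
    2 * (Fintype.card L : ℝ) * b + Fintype.card L * ((k - 1 : ℕ) : ℝ) + 2 ≤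
      ∑ u, ∑ v, if (joinGraph H b).Adj u v then (1 : ℝ) else 0 := by
  rw [Fintype.sum_sum_type]
  simp only [Fintype.sum_sum_type]
  have h1 : ∀ u : L, (∑ v : L, if (joinGraph H b).Adj (Sum.inl u) (Sum.inl v) then (1 : ℝ) else 0)
      = ((k - 1 : ℕ) : ℝ) := by
    intro u
    rw [← hdeg u, Finset.card_filter]
    push_cast
    refine Finset.sum_congr rfl fun v _ => ?_
    exact if_congr Iff.rfl rfl rfl
  have h2 : ∀ u : L, (∑ v : Fin b,
      if (joinGraph H b).Adj (Sum.inl u) (Sum.inr v) then (1 : ℝ) else 0) = b := by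
    intro u
    simp [joinGraph]
  have h3 : ∀ u : Fin b, (∑ v : L,
      if (joinGraph H b).Adj (Sum.inr u) (Sum.inl v) then (1 : ℝ) else 0) = Fintype.card L := by
    intro u
    simp [joinGraph]
  have h4 : (2 : ℝ) ≤ ∑ u : Fin b, ∑ v : Fin b,
      if (joinGraph H b).Adj (Sum.inr u) (Sum.inr v) then (1 : ℝ) else 0 := by
    let f : Fin b → Fin b → ℝ := fun u v =>
      if (joinGraph H b).Adj (Sum.inr u) (Sum.inr v) then (1 : ℝ) else 0
    have hf0 : ∀ u v, 0 ≤ f u v := by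
      intro u v
      simp only [f]
      split_ifs <;> norm_num
    let z : Fin b := ⟨0, by omega⟩
    let o : Fin b := ⟨1, by omega⟩
    have hzo : z ≠ o := by simp [z, o]
    have e1 : f z o = 1 := if_pos (Or.inl ⟨rfl, rfl⟩)
    have e2 : f o z = 1 := if_pos (Or.inr ⟨rfl, rfl⟩)
    have s1 : f z o ≤ ∑ v, f z v :=
      Finset.single_le_sum (fun v _ => hf0 z v) (Finset.mem_univ o)
    have s2 : f o z ≤ ∑ v, f o v :=
      Finset.single_le_sum (fun v _ => hf0 o v) (Finset.mem_univ z)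
    have s3 : (∑ u ∈ {z, o}, ∑ v, f u v) ≤ ∑ u, ∑ v, f u v :=
      Finset.sum_le_sum_of_subset_of_nonneg (Finset.subset_univ _)
        (fun u _ _ => Finset.sum_nonneg fun v _ => hf0 u v)
    rw [Finset.sum_pair hzo] at s3
    change 2 ≤ ∑ u, ∑ v, f u v
    linarith
  simp only [h1, h2, Finset.sum_add_distrib, h3]
  simp only [Finset.sum_const, Finset.card_univ, Fintype.card_fin, nsmul_eq_mul]
  linarith

/-- Existence of a good wheel-free graph with prescribed part sizes. -/
lemma exists_good (k c b n : ℕ) (hk : 2 ≤ k) (hb : 2 ≤ b) (hc : k * k ≤ c) (hn : 2 * c + b = n) :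
    ∃ G : SimpleGraph (Fin n), WheelFree (2 * k + 1) G ∧
      2 * ((2 * c : ℕ) : ℝ) * b + ((2 * c : ℕ) : ℝ) * ((k - 1 : ℕ) : ℝ) + 2 ≤ lam1 G * n := by
  classical
  obtain ⟨p, q, hpq⟩ : ∃ p q, p * k + q * ((k - 1) * 2) = 2 * c := by
    obtain ⟨m, rfl⟩ : ∃ m, k = m + 1 := ⟨k - 1, by omega⟩
    let q := (c * m) % (m + 1)
    have hq : q < m + 1 := Nat.mod_lt _ (by omega)
    have hqle : q * (m * 2) ≤ 2 * c := by nlinarith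
    have hd : (m + 1) ∣ 2 * c - q * (m * 2) := by
      apply (Nat.modEq_iff_dvd' hqle).1
      have h1 : q ≡ c * m [MOD (m + 1)] := Nat.mod_modEq _ _
      have h2 : q * (m * 2) ≡ c * m * (m * 2) [MOD (m + 1)] := h1.mul_right _
      refine h2.trans ?_
      rw [← Int.natCast_modEq_iff]
      apply Int.ModEq.symm
      apply (Int.modEq_iff_dvd).2
      push_cast
      exact ⟨2 * c * (m - 1), by ring⟩
    obtain ⟨p, hp⟩ := hd
    refine ⟨p, q, ?_⟩
    simp only [Nat.add_sub_cancel]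
    rw [mul_comm p, ← hp]
    omega
  let H := compGraph p q k
  have hcard : Fintype.card ((Fin p × Fin k) ⊕ (Fin q × (Fin (k - 1) × Bool))) = 2 * c := by
    simp [hpq]
  have hcardV : Fintype.card (((Fin p × Fin k) ⊕ (Fin q × (Fin (k - 1) × Bool))) ⊕ Fin b) = n := by
    rw [Fintype.card_sum, hcard, Fintype.card_fin, hn]
  let e := (Fintype.equivFinOfCardEq hcardV).symm
  refine ⟨(joinGraph H b).comap e, ?_, ?_⟩
  · rintro ⟨f, hf⟩
    apply joinGraph_free H (compLab p q k) k b hk (compGraph_deg p q k) ?_ (compLab_size p q k hk)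
    · exact ⟨f.trans e.toEmbedding, fun x y h => hf x y h⟩
    · rintro (u | u) (v | v) h
      · exact congrArg Sum.inl h.1
      · exact h.elim
      · exact h.elim
      · exact congrArg Sum.inr h.1
  · have h1 := joinGraph_sum H b k hb (compGraph_deg p q k)
    rw [hcard] at h1
    refine h1.trans (le_trans (le_of_eq ?_) (lam1_mul_ge _))
    rw [← Equiv.sum_comp e]
    refine Finset.sum_congr rfl fun u _ => ?_
    rw [← Equiv.sum_comp e]
    refine Finset.sum_congr rfl fun v _ => ?_
    simp only [SimpleGraph.comap_adj]

/-- Spectral extremal `W_{2k+1}`-free graphs have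
`λ₁(G) > (n + k - 1)/2`. -/
theorem spex_lower_bound (k : ℕ) (hk : 2 ≤ k) :
    ∃ N : ℕ, ∀ n : ℕ, N ≤ n → ∀ G : SimpleGraph (Fin n),
      IsSpexWheel (2 * k + 1) G → ((n : ℝ) + (k : ℝ) - 1) / 2 < lam1 G := by
  refine ⟨4 * (k * k) + 100, fun n hn G hG => ?_⟩
  obtain ⟨c, b, hcb, hb, hc, hs⟩ : ∃ c b : ℕ, 2 * c + b = n ∧ 2 ≤ b ∧ k * k ≤ c ∧
      0 < (2 * (c : ℤ) - b) * ((k : ℤ) - 1 - (2 * (c : ℤ) - b)) + 4 := by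
    rcases Nat.lt_or_ge k 3 with h3 | h3
    · have hk2 : k = 2 := by omega
      subst hk2
      refine ⟨(n + 2) / 4, n - 2 * ((n + 2) / 4), by omega, by omega, by omega, ?_⟩
      generalize hsd : (2 * (((n + 2) / 4 : ℕ) : ℤ) - ((n - 2 * ((n + 2) / 4) : ℕ) : ℤ)) = s
      have h1 : -1 ≤ s := by omega
      have h2 : s ≤ 2 := by omega
      interval_cases s <;> norm_num
    · refine ⟨(n + 3) / 4, n - 2 * ((n + 3) / 4), by omega, by omega, by omega, ?_⟩
      generalize hsd : (2 * (((n + 3) / 4 : ℕ) : ℤ) - ((n - 2 * ((n + 3) / 4) : ℕ) : ℤ)) = s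
      have h1 : 0 ≤ s := by omega
      have h2 : s ≤ 3 := by omega
      interval_cases s <;> omega
  obtain ⟨G', hfree, hlam⟩ := exists_good k c b n hk hb hc hcb
  have hle := hG.2 G' hfree
  have hn0 : (0 : ℝ) < n := by
    have : 0 < n := by omega
    exact_mod_cast this
  have hs' : (0 : ℝ) < (2 * (c : ℝ) - b) * ((k : ℝ) - 1 - (2 * (c : ℝ) - b)) + 4 := by
    exact_mod_cast hs
  have hnR : (n : ℝ) = 2 * c + b := by
    rw [← hcb]
    push_cast
    ring
  have hlam2 := hlam.trans (mul_le_mul_of_nonneg_right hle hn0.le)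
  rw [Nat.cast_sub (by omega : 1 ≤ k)] at hlam2
  push_cast at hlam2
  have : ((n : ℝ) + (k : ℝ) - 1) / 2 * n < lam1 G * n := by
    refine lt_of_lt_of_le ?_ hlam2
    rw [hnR]
    nlinarith
  exact lt_of_mul_lt_mul_right this hn0.le
end

section
/- Let k ≥ 2 be an integer. For all sufficiently large n, if G is an n-vertex W_{2k+1}-free simple graph attaining the maximum spectral radius among all n-vertex W_{2k+1}-free graphs and V(G) = S ⊔ T is a maximum cut of G, then n/2 − √(3nk/2) ≤ |S| ≤ n/2 + √(3nk/2) and n/2 − √(3nk/2) ≤ |T| ≤ n/2 + √(3nk/2). -/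
lemma wheel_of_biclique {n k : ℕ} (G : SimpleGraph (Fin n)) (u : Fin n)
    (P Q : Finset (Fin n)) (hP : k ≤ P.card) (hQ : k ≤ Q.card)
    (huP : ∀ p ∈ P, G.Adj u p) (huQ : ∀ q ∈ Q, G.Adj u q)
    (hPQ : ∀ p ∈ P, ∀ q ∈ Q, G.Adj p q) :
    ContainsCopy (wheelGraph (2 * k + 1)) G := by
  classical
  set p := P.orderEmbOfCardLe hP with hp
  set q := Q.orderEmbOfCardLe hQ with hq
  have hpm : ∀ i, p i ∈ P := fun i => Finset.orderEmbOfCardLe_mem P hP i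
  have hqm : ∀ i, q i ∈ Q := fun i => Finset.orderEmbOfCardLe_mem Q hQ i
  let f : Fin (2 * k + 1) → Fin n := fun i =>
    if h0 : i.val = 0 then u
    else if h1 : i.val % 2 = 1 then p ⟨i.val / 2, by omega⟩
    else q ⟨i.val / 2 - 1, by omega⟩
  have f0 : ∀ i : Fin (2 * k + 1), i.val = 0 → f i = u := fun i h => by
    simp only [f, h, dite_true]
  have f1 : ∀ (i : Fin (2 * k + 1)), i.val % 2 = 1 →
      ∃ j : Fin k, f i = p j ∧ i.val = 2 * j.val + 1 := fun i h =>
    ⟨⟨i.val / 2, by omega⟩, by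
      have : i.val ≠ 0 := by omega
      simp only [f, this, h, dite_true, dite_false], by simp only; omega⟩
  have f2 : ∀ (i : Fin (2 * k + 1)), i.val ≠ 0 → i.val % 2 ≠ 1 →
      ∃ j : Fin k, f i = q j ∧ i.val = 2 * j.val + 2 := fun i h0 h =>
    ⟨⟨i.val / 2 - 1, by omega⟩, by
      simp only [f, h0, h, dite_false], by simp only; omega⟩
  have cases3 : ∀ i : Fin (2 * k + 1), (i.val = 0 ∧ f i = u) ∨
      (∃ j : Fin k, f i = p j ∧ i.val = 2 * j.val + 1) ∨
      (∃ j : Fin k, f i = q j ∧ i.val = 2 * j.val + 2) := by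
    intro i
    by_cases h0 : i.val = 0
    · exact Or.inl ⟨h0, f0 i h0⟩
    · by_cases h1 : i.val % 2 = 1
      · exact Or.inr (Or.inl (f1 i h1))
      · exact Or.inr (Or.inr (f2 i h0 h1))
  have key : ∀ a b, (wheelGraph (2 * k + 1)).Adj a b → G.Adj (f a) (f b) := by
    intro a b hab
    obtain ⟨hne, h⟩ := hab
    have hne' : a.val ≠ b.val := fun h => hne (Fin.ext h)
    rcases cases3 a with ⟨ha, ea⟩ | ⟨i, ea, ha⟩ | ⟨i, ea, ha⟩ <;>
    rcases cases3 b with ⟨hb, eb⟩ | ⟨j, eb, hb⟩ | ⟨j, eb, hb⟩ <;> rw [ea, eb]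
    · omega
    · exact huP _ (hpm _)
    · exact huQ _ (hqm _)
    · exact (huP _ (hpm _)).symm
    · exfalso; omega
    · exact hPQ _ (hpm _) _ (hqm _)
    · exact (huQ _ (hqm _)).symm
    · exact (hPQ _ (hpm _) _ (hqm _)).symm
    · exfalso; omega
  have inj : Function.Injective f := by
    intro a b hab
    apply Fin.ext
    rcases cases3 a with ⟨ha, ea⟩ | ⟨i, ea, ha⟩ | ⟨i, ea, ha⟩ <;>
    rcases cases3 b with ⟨hb, eb⟩ | ⟨j, eb, hb⟩ | ⟨j, eb, hb⟩ <;> rw [ea, eb] at hab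
    · omega
    · exact absurd hab (huP _ (hpm _)).ne
    · exact absurd hab (huQ _ (hqm _)).ne
    · exact absurd hab.symm (huP _ (hpm _)).ne
    · have := p.injective hab
      subst this; omega
    · exact absurd hab (hPQ _ (hpm _) _ (hqm _)).ne
    · exact absurd hab.symm (huQ _ (hqm _)).ne
    · exact absurd hab.symm (hPQ _ (hpm _) _ (hqm _)).ne
    · have := q.injective hab
      subst this; omega
  exact ⟨⟨f, inj⟩, key⟩

open scoped Classical in
lemma kst_aux {n : ℕ} (G : SimpleGraph (Fin n)) (A H : Finset (Fin n)) (δ : ℝ) (hδ : 0 < δ)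
    (hn : 0 < n) (hHne : H.Nonempty)
    (hH : ∀ v ∈ H, 2 * δ * n ≤ ((A.filter fun w => G.Adj v w).card : ℝ)) (j : ℕ)
    (hj : (j : ℝ) ≤ δ * n) :
    ∃ W ⊆ A, W.card = j ∧ ∃ V ⊆ H, δ ^ j * (H.card : ℝ) ≤ V.card ∧
      ∀ v ∈ V, ∀ w ∈ W, G.Adj v w := by
  have hn' : (0 : ℝ) < n := by exact_mod_cast hn
  induction j with
  | zero => exact ⟨∅, by simp, by simp, H, subset_rfl, by simp, by simp⟩
  | succ j ih =>
    push_cast at hj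
    obtain ⟨W, hWA, hWc, V, hVH, hVc, hVW⟩ := ih (by linarith)
    have hdeg : ∀ v ∈ H, δ * n ≤ (((A \ W).filter fun w => G.Adj v w).card : ℝ) := by
      intro v hv
      have h1 := hH v hv
      have h2 : (A.filter fun w => G.Adj v w) ⊆ ((A \ W).filter fun w => G.Adj v w) ∪ W := by
        intro w hw
        simp only [Finset.mem_filter, Finset.mem_union, Finset.mem_sdiff] at hw ⊢
        tauto
      have h3 := (Finset.card_le_card h2).trans (Finset.card_union_le _ _)
      have h4 : ((A.filter fun w => G.Adj v w).card : ℝ) ≤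
        ((A \ W).filter fun w => G.Adj v w).card + W.card := by exact_mod_cast h3
      rw [hWc] at h4
      linarith
    have hne : (A \ W).Nonempty := by
      obtain ⟨v, hv⟩ := hHne
      by_contra h
      rw [Finset.not_nonempty_iff_eq_empty] at h
      have := hdeg v hv
      rw [h] at this
      simp at this
      have : 0 < δ * n := by positivity
      linarith
    have hsum : ∑ w ∈ A \ W, ((V.filter fun v => G.Adj v w).card : ℝ)
        = ∑ v ∈ V, (((A \ W).filter fun w => G.Adj v w).card : ℝ) := by
      have := Finset.sum_card_bipartiteAbove_eq_sum_card_bipartiteBelow (s := V) (t := A \ W)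
        (fun v w => G.Adj v w)
      unfold Finset.bipartiteAbove Finset.bipartiteBelow at this
      exact_mod_cast this.symm
    obtain ⟨w, hw, hwV⟩ : ∃ w ∈ A \ W, δ * V.card ≤ ((V.filter fun v => G.Adj v w).card : ℝ) := by
      apply Finset.exists_le_of_sum_le hne
      rw [hsum, Finset.sum_const, nsmul_eq_mul]
      have h1 : ∑ v ∈ V, (δ * n) ≤ ∑ v ∈ V, (((A \ W).filter fun w => G.Adj v w).card : ℝ) :=
        Finset.sum_le_sum fun v hv => hdeg v (hVH hv)
      rw [Finset.sum_const, nsmul_eq_mul] at h1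
      have h2 : ((A \ W).card : ℝ) ≤ n := by
        have := Finset.card_le_univ (A \ W)
        rw [Fintype.card_fin] at this
        exact_mod_cast this
      have h3 : 0 ≤ δ * (V.card : ℝ) := by positivity
      nlinarith
    rw [Finset.mem_sdiff] at hw
    refine ⟨insert w W, ?_, ?_, V.filter fun v => G.Adj v w, ?_, ?_, ?_⟩
    · intro z hz
      rcases Finset.mem_insert.1 hz with rfl | hz
      · exact hw.1
      · exact hWA hz
    · rw [Finset.card_insert_of_notMem hw.2, hWc]
    · exact (Finset.filter_subset _ _).trans hVH
    · have := mul_le_mul_of_nonneg_left hVc hδ.le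
      rw [pow_succ]
      linarith
    · intro v hv z hz
      rw [Finset.mem_filter] at hv
      rcases Finset.mem_insert.1 hz with rfl | hz
      · exact hv.2
      · exact hVW v hv.1 z hz

open scoped Classical in
/-- A wheel-free graph has sparse neighbourhoods. -/
lemma sparse_nbhd (k : ℕ) (hk : 2 ≤ k) (ε : ℝ) (hε : 0 < ε) :
    ∃ N : ℕ, ∀ n : ℕ, N ≤ n → ∀ G : SimpleGraph (Fin n), WheelFree (2 * k + 1) G →
      ∀ u : Fin n, ∀ A : Finset (Fin n), (∀ v ∈ A, G.Adj u v) →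
        ∑ v ∈ A, ((A.filter fun w => G.Adj v w).card : ℝ) ≤ ε * n ^ 2 := by
  set δ := ε / 4 with hδ
  have hδ0 : 0 < δ := by positivity
  obtain ⟨N, hN⟩ := exists_nat_ge (k / δ + k / (δ ^ k * (2 * δ)) + 1)
  refine ⟨N, fun n hn G hG u A hA => ?_⟩
  by_contra hcon
  push Not at hcon
  apply hG
  have hNn : (N : ℝ) ≤ n := by exact_mod_cast hn
  have hk0 : (0 : ℝ) < k := by positivity
  have p1 : 0 < k / δ := by positivity
  have p2 : 0 < k / (δ ^ k * (2 * δ)) := by positivity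
  have hn1 : (k : ℝ) ≤ δ * n := by
    have : k / δ ≤ n := by linarith
    rwa [div_le_iff₀' hδ0] at this
  have hn2 : (k : ℝ) ≤ δ ^ k * (2 * δ) * n := by
    have : k / (δ ^ k * (2 * δ)) ≤ n := by linarith
    rwa [div_le_iff₀' (by positivity)] at this
  have hnR : (0 : ℝ) < n := by linarith
  have hn0 : 0 < n := by exact_mod_cast hnR
  set H := A.filter fun v => 2 * δ * n ≤ ((A.filter fun w => G.Adj v w).card : ℝ) with hH
  have hcardle : ∀ X : Finset (Fin n), (X.card : ℝ) ≤ n := by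
    intro X
    have := Finset.card_le_univ X
    rw [Fintype.card_fin] at this
    exact_mod_cast this
  have hHc : 2 * δ * n ≤ H.card := by
    have h1 : ∑ v ∈ A, ((A.filter fun w => G.Adj v w).card : ℝ) ≤
        ∑ v ∈ A, ((if 2 * δ * n ≤ ((A.filter fun w => G.Adj v w).card : ℝ) then (n : ℝ) else 0)
          + 2 * δ * n) := by
      apply Finset.sum_le_sum
      intro v _
      split_ifs with h
      · have := hcardle (A.filter fun w => G.Adj v w)
        have : 0 < 2 * δ * n := by positivity
        linarith
      · linarith
    rw [Finset.sum_add_distrib, ← Finset.sum_filter, Finset.sum_const, Finset.sum_const,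
      nsmul_eq_mul, nsmul_eq_mul, ← hH] at h1
    have h2 : (A.card : ℝ) * (2 * δ * n) ≤ n * (2 * δ * n) :=
      mul_le_mul_of_nonneg_right (hcardle A) (by positivity)
    have h3 : (2 * δ * n) * n ≤ H.card * n := by
      have : ε = 4 * δ := by rw [hδ]; ring
      rw [this] at hcon
      nlinarith
    exact le_of_mul_le_mul_right h3 hnR
  have hHne : H.Nonempty := by
    rw [← Finset.card_pos]
    have : (0 : ℝ) < H.card := lt_of_lt_of_le (by positivity) hHc
    exact_mod_cast this
  obtain ⟨W, hWA, hWc, V, hVH, hVc, hVW⟩ := kst_aux G A H δ hδ0 hn0 hHne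
    (fun v hv => (Finset.mem_filter.1 hv).2) k hn1
  refine wheel_of_biclique G u V W ?_ hWc.ge (fun p hp => hA p ((Finset.filter_subset _ _) (hVH hp)))
    (fun q hq => hA q (hWA hq)) hVW
  have h4 : δ ^ k * (2 * δ * n) ≤ δ ^ k * H.card := mul_le_mul_of_nonneg_left hHc (by positivity)
  have : (k : ℝ) ≤ V.card := by nlinarith
  exact_mod_cast this

/-- The balanced complete bipartite graph. -/
def balBip (n : ℕ) : SimpleGraph (Fin n) where
  Adj a b := ¬ (a.val < n / 2 ↔ b.val < n / 2)
  symm := ⟨fun a b h => by tauto⟩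
  loopless := ⟨fun a h => by tauto⟩

lemma balBip_free (n k : ℕ) (hk : 2 ≤ k) : WheelFree (2 * k + 1) (balBip n) := by
  rintro ⟨f, hf⟩
  have h01 := hf ⟨0, by omega⟩ ⟨1, by omega⟩ ⟨by simp, by simp⟩
  have h02 := hf ⟨0, by omega⟩ ⟨2, by omega⟩ ⟨by simp, by simp⟩
  have h12 := hf ⟨1, by omega⟩ ⟨2, by omega⟩ ⟨by simp, by simp⟩
  simp only [balBip] at h01 h02 h12
  tauto

lemma balBip_lam (n : ℕ) (hn : 2 ≤ n) :
    Real.sqrt (((n / 2 : ℕ) : ℝ) * ((n - n / 2 : ℕ) : ℝ)) ≤ lam1 (balBip n) := by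
  classical
  unfold lam1
  apply le_csSup
  · exact (Module.End.finite_hasEigenvalue _).bddAbove
  set a : ℝ := ((n / 2 : ℕ) : ℝ) with ha
  set b : ℝ := ((n - n / 2 : ℕ) : ℝ) with hb
  have ha0 : 0 < a := by rw [ha]; exact_mod_cast (by omega : 0 < n / 2)
  have hb0 : 0 < b := by rw [hb]; exact_mod_cast (by omega : 0 < n - n / 2)
  have hca : ((Finset.univ.filter fun w : Fin n => w.val < n / 2).card : ℝ) = a := by
    rw [ha, Fin.card_filter_val_lt]
    congr 1
    omega
  have hcb : ((Finset.univ.filter fun w : Fin n => ¬ w.val < n / 2).card : ℝ) = b := by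
    have := Finset.card_filter_add_card_filter_not (s := (Finset.univ : Finset (Fin n)))
      (fun w : Fin n => w.val < n / 2)
    rw [Fin.card_filter_val_lt, Finset.card_univ, Fintype.card_fin] at this
    rw [hb]
    congr 1
    omega
  let x : Fin n → ℝ := fun v => if v.val < n / 2 then Real.sqrt b else Real.sqrt a
  apply Module.End.hasEigenvalue_of_hasEigenvector (x := x)
  rw [Module.End.hasEigenvector_iff]
  constructor
  · rw [Module.End.mem_eigenspace_iff]
    ext v
    rw [Matrix.toLin'_apply, SimpleGraph.adjMatrix_mulVec_apply, SimpleGraph.neighborFinset_eq_filter]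
    rw [Real.sqrt_mul ha0.le]
    have sa := Real.mul_self_sqrt ha0.le
    have sb := Real.mul_self_sqrt hb0.le
    by_cases hv : v.val < n / 2
    · have e1 : (Finset.univ.filter fun w => (balBip n).Adj v w)
          = Finset.univ.filter fun w : Fin n => ¬ w.val < n / 2 := by
        ext w; simp [balBip, hv]
      rw [e1, Finset.sum_congr rfl (g := fun _ => Real.sqrt a)]
      · rw [Finset.sum_const, nsmul_eq_mul, hcb]
        simp only [x, hv, if_true, Pi.smul_apply, smul_eq_mul]
        rw [mul_assoc, sb, mul_comm]
      · intro w hw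
        simp only [Finset.mem_filter] at hw
        simp only [x, hw.2, if_false]
    · have e1 : (Finset.univ.filter fun w => (balBip n).Adj v w)
          = Finset.univ.filter fun w : Fin n => w.val < n / 2 := by
        ext w; simp [balBip, hv]
      rw [e1, Finset.sum_congr rfl (g := fun _ => Real.sqrt b)]
      · rw [Finset.sum_const, nsmul_eq_mul, hca]
        simp only [x, hv, if_false, Pi.smul_apply, smul_eq_mul]
        rw [mul_right_comm, sa]
      · intro w hw
        simp only [Finset.mem_filter] at hw
        simp only [x, hw.2, if_true]
  · intro h
    have := congrFun h ⟨0, by omega⟩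
    have h0 : 0 < n / 2 := by omega
    simp only [x, h0, if_true, Pi.zero_apply] at this
    have := Real.sqrt_pos.2 hb0
    linarith

open scoped Classical in
/-- Spectral input: nonnegative unit vector and `lam` close to `n/2`. -/
lemma spectral_input {n k : ℕ} (hk : 2 ≤ k) (hn : 2 ≤ n) (G : SimpleGraph (Fin n))
    (hG : IsSpexWheel (2 * k + 1) G) :
    ∃ (lam : ℝ) (y : Fin n → ℝ), 0 < lam ∧ ((n : ℝ) ^ 2 - 1) / 4 ≤ lam ^ 2 ∧
      (∀ v, 0 ≤ y v) ∧ ∑ v, y v ^ 2 = 1 ∧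
      ∀ v, lam * y v ≤ ∑ w, (if G.Adj v w then (1 : ℝ) else 0) * y w := by
  have h1 := (balBip_lam n hn).trans (hG.2 _ (balBip_free n k hk))
  have hab : ((n : ℝ) ^ 2 - 1) / 4 ≤ ((n / 2 : ℕ) : ℝ) * ((n - n / 2 : ℕ) : ℝ) := by
    rw [Nat.cast_sub (by omega)]
    rcases Nat.even_or_odd' n with ⟨c, hc | hc⟩
    · have : n / 2 = c := by omega
      rw [this, hc]; push_cast; nlinarith
    · have : n / 2 = c := by omega
      rw [this, hc]; push_cast; nlinarith
  have hn' : (2 : ℝ) ≤ n := by exact_mod_cast hn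
  have hpos : 0 < ((n : ℝ) ^ 2 - 1) / 4 := by nlinarith
  have hlpos : 0 < lam1 G := lt_of_lt_of_le (Real.sqrt_pos.2 (hpos.trans_le hab)) h1
  have hl2 : ((n : ℝ) ^ 2 - 1) / 4 ≤ lam1 G ^ 2 := by
    refine hab.trans ?_
    exact (Real.sqrt_le_left hlpos.le).1 h1
  have hmem : lam1 G ∈ {μ : ℝ | Module.End.HasEigenvalue (Matrix.toLin' (G.adjMatrix ℝ)) μ} := by
    have hne : ({μ : ℝ | Module.End.HasEigenvalue (Matrix.toLin' (G.adjMatrix ℝ)) μ}).Nonempty := by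
      by_contra h
      rw [Set.not_nonempty_iff_eq_empty] at h
      have : lam1 G = 0 := by
        unfold lam1
        have h2 : sSup {μ : ℝ | Module.End.HasEigenvalue (Matrix.toLin' (G.adjMatrix ℝ)) μ} = 0 := by
          rw [h, Real.sSup_empty]
        convert h2
      linarith
    have := hne.csSup_mem (Module.End.finite_hasEigenvalue _)
    unfold lam1
    convert this
  obtain ⟨x, hx⟩ := Module.End.HasEigenvalue.exists_hasEigenvector hmem
  rw [Module.End.hasEigenvector_iff, Module.End.mem_eigenspace_iff] at hx
  obtain ⟨hx, hx0⟩ := hx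
  have hxv : ∀ v, ∑ w, (if G.Adj v w then (1 : ℝ) else 0) * x w = lam1 G * x v := by
    intro v
    have := congrFun hx v
    rw [Matrix.toLin'_apply, SimpleGraph.adjMatrix_mulVec_apply,
      SimpleGraph.neighborFinset_eq_filter, Finset.sum_filter] at this
    simp only [Pi.smul_apply, smul_eq_mul] at this
    rw [← this]
    apply Finset.sum_congr rfl
    intro w _
    split_ifs <;> simp
  have hs : 0 < ∑ v, x v ^ 2 := by
    obtain ⟨v, hv⟩ := Function.ne_iff.1 hx0
    apply Finset.sum_pos' (fun i _ => sq_nonneg _)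
    exact ⟨v, Finset.mem_univ _, by have : x v ≠ 0 := hv
                                    positivity⟩
  set r := Real.sqrt (∑ v, x v ^ 2) with hr
  have hr0 : 0 < r := Real.sqrt_pos.2 hs
  refine ⟨lam1 G, fun v => |x v| / r, hlpos, hl2, fun v => by positivity, ?_, ?_⟩
  · simp only [div_pow, sq_abs]
    rw [← Finset.sum_div, hr, Real.sq_sqrt hs.le, div_self hs.ne']
  · intro v
    have : lam1 G * |x v| ≤ ∑ w, (if G.Adj v w then (1 : ℝ) else 0) * |x w| := by
      have e : lam1 G * |x v| = |lam1 G * x v| := by rw [abs_mul, abs_of_pos hlpos]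
      rw [e, ← hxv]
      refine (Finset.abs_sum_le_sum_abs _ _).trans (Finset.sum_le_sum fun w _ => ?_)
      split_ifs <;> simp
    simp only [← mul_div_assoc]
    rw [← Finset.sum_div]
    gcongr

/-- Adjacency indicator. -/
noncomputable def ai {n : ℕ} (G : SimpleGraph (Fin n)) (u v : Fin n) : ℝ := by
  classical
  exact if G.Adj u v then 1 else 0

/-- Membership indicator. -/
noncomputable def si {n : ℕ} (S : Finset (Fin n)) (v : Fin n) : ℝ := if v ∈ S then 1 else 0

/-- Indicator of being on opposite sides. -/
noncomputable def ci {n : ℕ} (S : Finset (Fin n)) (u v : Fin n) : ℝ :=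
  si S u * (1 - si S v) + si S v * (1 - si S u)

lemma ai_zo {n : ℕ} (G : SimpleGraph (Fin n)) (u v : Fin n) : ai G u v = 0 ∨ ai G u v = 1 := by
  unfold ai; split_ifs <;> simp

lemma ai_comm {n : ℕ} (G : SimpleGraph (Fin n)) (u v : Fin n) : ai G u v = ai G v u := by
  unfold ai
  by_cases h : G.Adj u v
  · simp [h, h.symm]
  · have h2 : ¬ G.Adj v u := fun h3 => h h3.symm
    simp [h, h2]

lemma ai_self {n : ℕ} (G : SimpleGraph (Fin n)) (u : Fin n) : ai G u u = 0 := by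
  unfold ai; simp

lemma ai_one {n : ℕ} {G : SimpleGraph (Fin n)} {u v : Fin n} : ai G u v = 1 ↔ G.Adj u v := by
  unfold ai; split_ifs with h <;> simp [h]

lemma ai_nonneg {n : ℕ} (G : SimpleGraph (Fin n)) (u v : Fin n) : 0 ≤ ai G u v := by
  rcases ai_zo G u v with h | h <;> rw [h] <;> norm_num

lemma ai_le {n : ℕ} (G : SimpleGraph (Fin n)) (u v : Fin n) : ai G u v ≤ 1 := by
  rcases ai_zo G u v with h | h <;> rw [h] <;> norm_num

lemma si_zo {n : ℕ} (S : Finset (Fin n)) (v : Fin n) : si S v = 0 ∨ si S v = 1 := by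
  unfold si; split_ifs <;> simp

lemma ci_zo {n : ℕ} (S : Finset (Fin n)) (u v : Fin n) : ci S u v = 0 ∨ ci S u v = 1 := by
  unfold ci
  rcases si_zo S u with h | h <;> rcases si_zo S v with h' | h' <;> rw [h, h'] <;> norm_num

lemma ci_comm {n : ℕ} (S : Finset (Fin n)) (u v : Fin n) : ci S u v = ci S v u := by
  unfold ci; ring

lemma ci_nonneg {n : ℕ} (S : Finset (Fin n)) (u v : Fin n) : 0 ≤ ci S u v := by
  rcases ci_zo S u v with h | h <;> rw [h] <;> norm_num

lemma ci_le {n : ℕ} (S : Finset (Fin n)) (u v : Fin n) : ci S u v ≤ 1 := by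
  rcases ci_zo S u v with h | h <;> rw [h] <;> norm_num

/-- Vertices on the same side have the same opposite side. -/
lemma ci_same {n : ℕ} (S : Finset (Fin n)) (u v w : Fin n) (h : ci S u v = 0) :
    ci S u w = ci S v w := by
  unfold ci at *
  rcases si_zo S u with h1 | h1 <;> rcases si_zo S v with h2 | h2 <;>
    rw [h1, h2] at h <;> rw [h1, h2] <;> norm_num at h

lemma cut_formula {n : ℕ} (G : SimpleGraph (Fin n)) (S : Finset (Fin n)) :
    (cutCount G S : ℝ) = ∑ u, ∑ v, ai G u v * (si S u * (1 - si S v)) := by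
  classical
  unfold cutCount
  rw [← Finset.sum_product', Finset.univ_product_univ, Finset.card_filter, Nat.cast_sum]
  apply Finset.sum_congr rfl
  rintro ⟨u, v⟩ _
  unfold ai si
  by_cases h1 : G.Adj u v <;> by_cases h2 : u ∈ S <;> by_cases h3 : v ∈ S <;> simp [h1, h2, h3]

lemma cut_formula2 {n : ℕ} (G : SimpleGraph (Fin n)) (S : Finset (Fin n)) :
    ∑ u, ∑ v, ai G u v * ci S u v = 2 * (cutCount G S : ℝ) := by
  have h : ∑ u, ∑ v, ai G u v * (si S v * (1 - si S u)) = (cutCount G S : ℝ) := by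
    rw [cut_formula, Finset.sum_comm]
    refine Finset.sum_congr rfl fun u _ => Finset.sum_congr rfl fun v _ => ?_
    rw [ai_comm]
  rw [two_mul]
  nth_rewrite 1 [cut_formula]
  rw [← h, ← Finset.sum_add_distrib]
  refine Finset.sum_congr rfl fun u _ => ?_
  rw [← Finset.sum_add_distrib]
  refine Finset.sum_congr rfl fun v _ => ?_
  unfold ci
  ring

lemma sum_si {n : ℕ} (S : Finset (Fin n)) : ∑ v, si S v = S.card := by
  unfold si; simp

lemma sum_ci {n : ℕ} (S : Finset (Fin n)) :
    ∑ u, ∑ v, ci S u v = 2 * ((S.card : ℝ) * (n - S.card)) := by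
  have h : ∀ u, ∑ v, ci S u v = si S u * (n - S.card) + S.card * (1 - si S u) := by
    intro u
    unfold ci
    rw [Finset.sum_add_distrib, ← Finset.mul_sum, ← Finset.sum_mul, Finset.sum_sub_distrib, sum_si]
    simp
  rw [Finset.sum_congr rfl fun u _ => h u, Finset.sum_add_distrib, ← Finset.mul_sum,
    ← Finset.sum_mul, Finset.sum_sub_distrib, sum_si]
  simp
  ring

lemma maxcut_flip {n : ℕ} (G : SimpleGraph (Fin n)) (S : Finset (Fin n))
    (h : ∀ S' : Finset (Fin n), cutCount G S' ≤ cutCount G S) (v : Fin n) :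
    ∑ w, ai G v w * (1 - ci S v w) ≤ ∑ w, ai G v w * ci S v w := by
  classical
  obtain ⟨S', hS'⟩ : ∃ S' : Finset (Fin n), ∀ w, si S' w =
      si S w + (1 - 2 * si S v) * (if w = v then 1 else 0) := by
    by_cases hv : v ∈ S
    · refine ⟨S.erase v, fun w => ?_⟩
      unfold si
      by_cases hw : w = v
      · subst hw; simp [hv]; norm_num
      · simp [hw]
    · refine ⟨insert v S, fun w => ?_⟩
      unfold si
      by_cases hw : w = v
      · subst hw; simp [hv]
      · simp [hw]
  have h1 : (cutCount G S' : ℝ) ≤ cutCount G S := by exact_mod_cast h S'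
  set t := 1 - 2 * si S v with ht
  have h2 : (cutCount G S' : ℝ) = cutCount G S + t * ∑ w, ai G v w * (1 - 2 * si S w) := by
    rw [cut_formula, cut_formula]
    have e : ∀ u w, ai G u w * (si S' u * (1 - si S' w)) =
        ai G u w * (si S u * (1 - si S w))
        + (if u = v then t * (ai G u w * (1 - si S w)) else 0)
        - (if w = v then t * (ai G u w * si S u) else 0)
        - (if u = v then (if w = v then t ^ 2 * ai G u w else 0) else 0) := by
      intro u w
      rw [hS', hS']
      split_ifs <;> ring
    simp only [e, Finset.sum_sub_distrib, Finset.sum_add_distrib]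
    have e1 : ∑ u, ∑ w, (if u = v then t * (ai G u w * (1 - si S w)) else 0)
        = t * ∑ w, ai G v w * (1 - si S w) := by
      rw [Finset.sum_comm]
      simp [Finset.mul_sum]
    have e2 : ∑ u, ∑ w, (if w = v then t * (ai G u w * si S u) else 0)
        = t * ∑ w, ai G v w * si S w := by
      simp [Finset.mul_sum, ai_comm G _ v]
    have e3 : ∑ u, ∑ w, (if u = v then (if w = v then t ^ 2 * ai G u w else 0) else 0) = 0 := by
      apply Finset.sum_eq_zero; intro u _
      apply Finset.sum_eq_zero; intro w _
      split_ifs with h1 h2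
      · rw [h1, h2, ai_self]; simp
      · rfl
      · rfl
    rw [e1, e2, e3, sub_zero, add_sub_assoc, ← mul_sub, ← Finset.sum_sub_distrib]
    congr 2
    apply Finset.sum_congr rfl
    intro w _; ring
  have h3 : t * ∑ w, ai G v w * (1 - 2 * si S w) =
      ∑ w, ai G v w * (1 - ci S v w) - ∑ w, ai G v w * ci S v w := by
    rw [Finset.mul_sum, ← Finset.sum_sub_distrib]
    apply Finset.sum_congr rfl
    intro w _
    rw [ht]; unfold ci; ring
  linarith

open scoped Classical in
/-- Some neighbourhood gives a large cut. -/
lemma big_cut {n : ℕ} (hn : 0 < n) (G : SimpleGraph (Fin n)) (lam : ℝ) (y : Fin n → ℝ)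
    (hl : 0 < lam) (hy : ∀ v, 0 ≤ y v) (hy1 : ∑ v, y v ^ 2 = 1)
    (hev : ∀ v, lam * y v ≤ ∑ w, ai G v w * y w) :
    ∃ u : Fin n, ∃ A : Finset (Fin n), (∀ v ∈ A, G.Adj u v) ∧
      lam ^ 2 ≤ cutCount G A + ∑ v ∈ A, ((A.filter fun w => G.Adj v w).card : ℝ) := by
  have : Nonempty (Fin n) := ⟨⟨0, hn⟩⟩
  obtain ⟨u, hu⟩ := Finite.exists_max y
  have hu0 : 0 < y u := by
    rcases (hy u).lt_or_eq with h | h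
    · exact h
    · exfalso
      have : ∑ v, y v ^ 2 = 0 := by
        apply Finset.sum_eq_zero
        intro v _
        have := le_antisymm ((hu v).trans h.symm.le) (hy v)
        rw [this]; norm_num
      linarith
  refine ⟨u, Finset.univ.filter fun v => G.Adj u v, fun v hv => (Finset.mem_filter.1 hv).2, ?_⟩
  set A := Finset.univ.filter fun v => G.Adj u v with hA
  have hsA : ∀ v, si A v = ai G u v := by
    intro v; unfold si ai; simp [hA]
  have h1 : lam ^ 2 * y u ≤ (∑ v, ∑ w, ai G u v * ai G v w) * y u := by
    calc lam ^ 2 * y u = lam * (lam * y u) := by ring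
      _ ≤ lam * ∑ v, ai G u v * y v := by gcongr; exact hev u
      _ = ∑ v, ai G u v * (lam * y v) := by
        rw [Finset.mul_sum]; exact Finset.sum_congr rfl fun v _ => by ring
      _ ≤ ∑ v, ai G u v * ∑ w, ai G v w * y w := by
        apply Finset.sum_le_sum; intro v _
        exact mul_le_mul_of_nonneg_left (hev v) (ai_nonneg _ _ _)
      _ ≤ ∑ v, ai G u v * ∑ w, ai G v w * y u := by
        apply Finset.sum_le_sum; intro v _
        refine mul_le_mul_of_nonneg_left (Finset.sum_le_sum fun w _ => ?_) (ai_nonneg _ _ _)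
        exact mul_le_mul_of_nonneg_left (hu w) (ai_nonneg _ _ _)
      _ = _ := by
        rw [Finset.sum_mul]
        refine Finset.sum_congr rfl fun v _ => ?_
        rw [Finset.mul_sum, Finset.sum_mul]
        exact Finset.sum_congr rfl fun w _ => by ring
  have h2 := le_of_mul_le_mul_right h1 hu0
  refine h2.trans (le_of_eq ?_)
  have h3 : ∑ v ∈ A, ((A.filter fun w => G.Adj v w).card : ℝ)
      = ∑ v, ∑ w, ai G u v * ai G v w * ai G u w := by
    rw [hA, Finset.sum_filter]
    refine Finset.sum_congr rfl fun v _ => ?_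
    by_cases huv : G.Adj u v
    · simp only [huv, if_true]
      rw [Finset.filter_filter, Finset.card_filter, Nat.cast_sum]
      refine Finset.sum_congr rfl fun w _ => ?_
      unfold ai
      by_cases h1 : G.Adj u w <;> by_cases h2 : G.Adj v w <;> simp [huv, h1, h2]
    · unfold ai
      simp [huv]
  rw [h3, cut_formula, ← Finset.sum_add_distrib]
  refine Finset.sum_congr rfl fun v _ => ?_
  rw [← Finset.sum_add_distrib]
  refine Finset.sum_congr rfl fun w _ => ?_
  rw [hsA, hsA]; ring

lemma cross_bound {n : ℕ} (hn : 0 < n) (G : SimpleGraph (Fin n)) (S : Finset (Fin n))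
    (y : Fin n → ℝ) (hy1 : ∑ v, y v ^ 2 = 1) :
    ∑ v, ∑ w, ai G v w * ci S v w * (y v * y w) ≤ (cutCount G S : ℝ) / n + n / 4 := by
  have hn' : (0 : ℝ) < n := by exact_mod_cast hn
  have h1 : ∀ v w, ai G v w * ci S v w * (y v * y w) ≤
      ai G v w * ci S v w * (1 / (2 * n)) + n / 2 * (ci S v w * (y v ^ 2 * y w ^ 2)) := by
    intro v w
    have hz : y v * y w ≤ 1 / (2 * n) + n / 2 * (y v ^ 2 * y w ^ 2) := by
      have e : 1 / (2 * n) + n / 2 * (y v ^ 2 * y w ^ 2) - y v * y w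
          = (1 - n * (y v * y w)) ^ 2 / (2 * n) := by
        field_simp; ring
      have : 0 ≤ (1 - n * (y v * y w)) ^ 2 / (2 * n) := by positivity
      linarith
    have hp : 0 ≤ n / 2 * (y v ^ 2 * y w ^ 2) := by positivity
    rcases ai_zo G v w with ha | ha <;> rcases ci_zo S v w with hc | hc <;> rw [ha, hc] <;> linarith
  have h2 : ∑ v, ∑ w, ci S v w * (y v ^ 2 * y w ^ 2) ≤ 1 / 2 := by
    set Y := ∑ v, si S v * y v ^ 2 with hY
    have e1 : ∀ v, ∑ w, ci S v w * (y v ^ 2 * y w ^ 2)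
        = si S v * y v ^ 2 * (1 - Y) + (y v ^ 2 - si S v * y v ^ 2) * Y := by
      intro v
      rw [hY, ← hy1, ← Finset.sum_sub_distrib, Finset.mul_sum, Finset.mul_sum,
        ← Finset.sum_add_distrib]
      refine Finset.sum_congr rfl fun w _ => ?_
      unfold ci; ring
    rw [Finset.sum_congr rfl fun v _ => e1 v, Finset.sum_add_distrib, ← Finset.sum_mul,
      ← Finset.sum_mul, Finset.sum_sub_distrib, hy1, ← hY]
    nlinarith [sq_nonneg (2 * Y - 1)]
  calc ∑ v, ∑ w, ai G v w * ci S v w * (y v * y w)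
      ≤ ∑ v, ∑ w, (ai G v w * ci S v w * (1 / (2 * n))
          + n / 2 * (ci S v w * (y v ^ 2 * y w ^ 2))) :=
        Finset.sum_le_sum fun v _ => Finset.sum_le_sum fun w _ => h1 v w
    _ = (∑ v, ∑ w, ai G v w * ci S v w) * (1 / (2 * n))
          + n / 2 * ∑ v, ∑ w, ci S v w * (y v ^ 2 * y w ^ 2) := by
        simp only [Finset.sum_add_distrib, Finset.mul_sum, Finset.sum_mul]
    _ ≤ _ := by
        rw [cut_formula2]
        have : n / 2 * ∑ v, ∑ w, ci S v w * (y v ^ 2 * y w ^ 2) ≤ (n : ℝ) / 2 * (1 / 2) := by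
          gcongr
        have e : 2 * (cutCount G S : ℝ) * (1 / (2 * n)) = cutCount G S / n := by field_simp
        rw [e]; linarith

lemma inside_bound {n : ℕ} (h : Fin n → Fin n → ℝ) (β y : Fin n → ℝ) (K C : ℝ)
    (hsym : ∀ v w, h v w = h w v) (h0 : ∀ v w, 0 ≤ h v w) (hK : 0 ≤ K)
    (hβ : ∀ v, β v = 0 ∨ β v = 1) (hy : ∀ v, 0 ≤ y v)
    (hg : ∀ v, β v = 0 → ∑ w, h v w * (1 - β w) ≤ K)
    (hb : ∀ v, β v = 1 → y v * ∑ w, h v w * y w ≤ C) :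
    ∑ v, ∑ w, h v w * (y v * y w) ≤ K * ∑ v, y v ^ 2 + 2 * ((∑ v, β v) * C) := by
  have hb' : ∑ v, ∑ w, β v * (h v w * (y v * y w)) ≤ (∑ v, β v) * C := by
    rw [Finset.sum_mul]
    refine Finset.sum_le_sum fun v _ => ?_
    have e : ∑ w, β v * (h v w * (y v * y w)) = β v * (y v * ∑ w, h v w * y w) := by
      rw [Finset.mul_sum, Finset.mul_sum]
      exact Finset.sum_congr rfl fun w _ => by ring
    rw [e]
    rcases hβ v with h1 | h1
    · rw [h1]; simp
    · rw [h1, one_mul, one_mul]; exact hb v h1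
  have hb2 : ∑ v, ∑ w, β w * (h v w * (y v * y w)) ≤ (∑ v, β v) * C := by
    rw [Finset.sum_comm]
    refine le_trans (le_of_eq ?_) hb'
    refine Finset.sum_congr rfl fun v _ => Finset.sum_congr rfl fun w _ => ?_
    rw [hsym]; ring
  have hg' : ∑ v, ∑ w, h v w * ((1 - β v) * (1 - β w)) * y v ^ 2 ≤ K * ∑ v, y v ^ 2 := by
    rw [Finset.mul_sum]
    refine Finset.sum_le_sum fun v _ => ?_
    have e : ∑ w, h v w * ((1 - β v) * (1 - β w)) * y v ^ 2
        = (1 - β v) * (∑ w, h v w * (1 - β w)) * y v ^ 2 := by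
      rw [Finset.mul_sum, Finset.sum_mul]
      exact Finset.sum_congr rfl fun w _ => by ring
    rw [e]
    rcases hβ v with h1 | h1
    · rw [h1]
      have := mul_le_mul_of_nonneg_right (hg v h1) (sq_nonneg (y v))
      linarith
    · rw [h1]
      have := mul_nonneg hK (sq_nonneg (y v))
      linarith
  have hg2 : ∑ v, ∑ w, h v w * ((1 - β v) * (1 - β w)) * y w ^ 2 ≤ K * ∑ v, y v ^ 2 := by
    rw [Finset.sum_comm]
    refine le_trans (le_of_eq ?_) hg'
    refine Finset.sum_congr rfl fun v _ => Finset.sum_congr rfl fun w _ => ?_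
    rw [hsym]; ring
  have key : ∑ v, ∑ w, h v w * (y v * y w) ≤
      ∑ v, ∑ w, ((1 / 2) * (h v w * ((1 - β v) * (1 - β w)) * y v ^ 2)
        + (1 / 2) * (h v w * ((1 - β v) * (1 - β w)) * y w ^ 2)
        + β v * (h v w * (y v * y w)) + β w * (h v w * (y v * y w))) := by
    refine Finset.sum_le_sum fun v _ => Finset.sum_le_sum fun w _ => ?_
    have p0 : 0 ≤ h v w * (y v * y w) := mul_nonneg (h0 _ _) (mul_nonneg (hy _) (hy _))
    have p1 : 0 ≤ h v w * (y v - y w) ^ 2 := mul_nonneg (h0 _ _) (sq_nonneg _)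
    rcases hβ v with h1 | h1 <;> rcases hβ w with h2 | h2 <;> rw [h1, h2] <;> nlinarith
  have e : ∑ v, ∑ w, ((1 / 2) * (h v w * ((1 - β v) * (1 - β w)) * y v ^ 2)
        + (1 / 2) * (h v w * ((1 - β v) * (1 - β w)) * y w ^ 2)
        + β v * (h v w * (y v * y w)) + β w * (h v w * (y v * y w)))
      = (1 / 2) * (∑ v, ∑ w, h v w * ((1 - β v) * (1 - β w)) * y v ^ 2)
        + (1 / 2) * (∑ v, ∑ w, h v w * ((1 - β v) * (1 - β w)) * y w ^ 2)
        + ∑ v, ∑ w, β v * (h v w * (y v * y w)) + ∑ v, ∑ w, β w * (h v w * (y v * y w)) := by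
    simp only [Finset.sum_add_distrib, Finset.mul_sum]
  linarith

/-- Vertices with many cross neighbours have few good neighbours on their own side. -/
lemma few_good {n k : ℕ} (G : SimpleGraph (Fin n)) (hG : WheelFree (2 * k + 1) G)
    (S : Finset (Fin n)) (β : Fin n → ℝ) (hβ : ∀ v, β v = 0 ∨ β v = 1) (τ : ℝ)
    (hτ : ∀ v, β v = 0 → ∑ w, ci S v w * (1 - ai G v w) ≤ τ)
    (v : Fin n) (hv : k + k * τ ≤ ∑ w, ai G v w * ci S v w) :
    ∑ w, ai G v w * (1 - ci S v w) * (1 - β w) ≤ k - 1 := by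
  classical
  set P := Finset.univ.filter fun w => G.Adj v w ∧ ci S v w = 0 ∧ β w = 0 with hP
  have e : ∑ w, ai G v w * (1 - ci S v w) * (1 - β w) = P.card := by
    rw [hP, Finset.card_filter, Nat.cast_sum]
    refine Finset.sum_congr rfl fun w _ => ?_
    by_cases h1 : G.Adj v w
    · rw [ai_one.2 h1]
      rcases ci_zo S v w with h2 | h2 <;> rcases hβ w with h3 | h3 <;> simp [h1, h2, h3]
    · have : ai G v w = 0 := by
        rcases ai_zo G v w with h | h
        · exact h
        · exact absurd (ai_one.1 h) h1
      simp [h1, this]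
  rw [e]
  by_contra hcon
  push Not at hcon
  have hPk : k ≤ P.card := by
    have : ((k : ℝ)) < P.card + 1 := by linarith
    have : k < P.card + 1 := by exact_mod_cast this
    omega
  obtain ⟨P', hP'P, hP'c⟩ := Finset.exists_subset_card_eq hPk
  set Q := Finset.univ.filter fun q => G.Adj v q ∧ ∀ p ∈ P', G.Adj p q with hQ
  apply hG
  have hmem : ∀ p ∈ P', G.Adj v p ∧ ci S v p = 0 ∧ β p = 0 := fun p hp =>
    (Finset.mem_filter.1 (hP'P hp)).2
  refine wheel_of_biclique G v P' Q hP'c.ge ?_ (fun p hp => (hmem p hp).1)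
    (fun q hq => (Finset.mem_filter.1 hq).2.1) (fun p hp q hq => (Finset.mem_filter.1 hq).2.2 p hp)
  have hpt : ∀ q, ai G v q * ci S v q ≤
      (if G.Adj v q ∧ ∀ p ∈ P', G.Adj p q then (1 : ℝ) else 0)
        + ∑ p ∈ P', ci S p q * (1 - ai G p q) := by
    intro q
    have hnn : ∀ p ∈ P', 0 ≤ ci S p q * (1 - ai G p q) := fun p _ =>
      mul_nonneg (ci_nonneg _ _ _) (by linarith [ai_le G p q])
    have hsn : 0 ≤ ∑ p ∈ P', ci S p q * (1 - ai G p q) := Finset.sum_nonneg hnn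
    rcases ai_zo G v q with h1 | h1
    · rw [h1]; split_ifs <;> linarith
    · have hadj := ai_one.1 h1
      rcases ci_zo S v q with h2 | h2
      · rw [h2]; split_ifs <;> linarith
      · rw [h1, h2]
        split_ifs with h3
        · linarith
        · have : ∃ p ∈ P', ¬ G.Adj p q := by
            by_contra h4
            push Not at h4
            exact h3 ⟨hadj, h4⟩
          obtain ⟨p, hp, hpq⟩ := this
          have h5 : ai G p q = 0 := by
            rcases ai_zo G p q with h | h
            · exact h
            · exact absurd (ai_one.1 h) hpq
          have h6 : ci S p q = 1 := by
            rw [← ci_same S v p q (hmem p hp).2.1, h2]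
          have := Finset.single_le_sum hnn hp
          rw [h5, h6] at this
          linarith
  have hs := Finset.sum_le_sum fun q (_ : q ∈ Finset.univ) => hpt q
  rw [Finset.sum_add_distrib, Finset.sum_comm] at hs
  have hQc : ∑ q, (if G.Adj v q ∧ ∀ p ∈ P', G.Adj p q then (1 : ℝ) else 0) = Q.card := by
    rw [hQ, Finset.card_filter, Nat.cast_sum]
    exact Finset.sum_congr rfl fun q _ => by split_ifs <;> simp
  have h7 : ∑ p ∈ P', ∑ q, ci S p q * (1 - ai G p q) ≤ k * τ := by
    have := Finset.sum_le_sum fun p (hp : p ∈ P') => hτ p (hmem p hp).2.2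
    rw [Finset.sum_const, hP'c, nsmul_eq_mul] at this
    exact this
  rw [hQc] at hs
  have : (k : ℝ) ≤ Q.card := by linarith
  exact_mod_cast this

set_option maxHeartbeats 1600000 in
lemma core {n k : ℕ} (hk : 2 ≤ k) (hn : 2 ≤ n) (η : ℝ) (hη : η * (2592 * k ^ 2) = 1)
    (hnη : 108 * k ≤ η * n) (G : SimpleGraph (Fin n)) (hG : WheelFree (2 * k + 1) G)
    (S : Finset (Fin n)) (hS : ∀ S' : Finset (Fin n), cutCount G S' ≤ cutCount G S)
    (hm : (n : ℝ) ^ 2 / 4 - η ^ 2 / 216 * n ^ 2 ≤ cutCount G S)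
    (lam : ℝ) (y : Fin n → ℝ) (hl : 0 < lam) (hl2 : ((n : ℝ) ^ 2 - 1) / 4 ≤ lam ^ 2)
    (hy : ∀ v, 0 ≤ y v) (hy1 : ∑ v, y v ^ 2 = 1)
    (hev : ∀ v, lam * y v ≤ ∑ w, ai G v w * y w) :
    (n : ℝ) ^ 2 / 4 - (k - 1) * n - 1 ≤ (S.card : ℝ) * (n - S.card) := by
  classical
  have hn2 : (2 : ℝ) ≤ n := by exact_mod_cast hn
  have hk2 : (2 : ℝ) ≤ k := by exact_mod_cast hk
  have hn0 : (0 : ℝ) < n := by linarith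
  have hη0 : 0 < η := by
    by_contra h
    push Not at h
    nlinarith [sq_nonneg (k : ℝ)]
  set τ := η * n with hτ
  set m : ℝ := (cutCount G S : ℝ) with hmdef
  set X : ℝ := (S.card : ℝ) * (n - S.card) with hX
  have hX4 : X ≤ (n : ℝ) ^ 2 / 4 := by
    rw [hX]; nlinarith [sq_nonneg ((n : ℝ) - 2 * S.card)]
  set β : Fin n → ℝ := fun v => if ∑ w, ci S v w * (1 - ai G v w) ≤ τ then 0 else 1 with hβdef
  have hβ : ∀ v, β v = 0 ∨ β v = 1 := by
    intro v; simp only [hβdef]; split_ifs <;> simp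
  have hβ0 : ∀ v, β v = 0 → ∑ w, ci S v w * (1 - ai G v w) ≤ τ := by
    intro v h
    by_contra h'
    simp only [hβdef, h', if_false] at h
    norm_num at h
  set b := ∑ v, β v with hb
  have hb0 : 0 ≤ b := Finset.sum_nonneg fun v _ => by rcases hβ v with h | h <;> rw [h]; norm_num
  have hmiss : ∑ v, ∑ w, ci S v w * (1 - ai G v w) = 2 * X - 2 * m := by
    rw [hX, hmdef, ← sum_ci, ← cut_formula2, ← Finset.sum_sub_distrib]
    refine Finset.sum_congr rfl fun v _ => ?_
    rw [← Finset.sum_sub_distrib]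
    exact Finset.sum_congr rfl fun w _ => by ring
  have hbτ : b * τ ≤ 2 * X - 2 * m := by
    rw [← hmiss, hb, Finset.sum_mul]
    refine Finset.sum_le_sum fun v _ => ?_
    have hnn : 0 ≤ ∑ w, ci S v w * (1 - ai G v w) := Finset.sum_nonneg fun w _ =>
      mul_nonneg (ci_nonneg _ _ _) (by linarith [ai_le G v w])
    simp only [hβdef]
    split_ifs with h
    · linarith
    · push Not at h; linarith
  have hbn : b ≤ η * n / 108 := by
    have h1 : b * (η * n) ≤ (η * n / 108) * (η * n) := by nlinarith
    exact le_of_mul_le_mul_right h1 (by positivity)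
  have hXm : m ≤ X := by nlinarith [mul_nonneg hb0 (by positivity : 0 ≤ τ)]
  have hηsmall : η * (k : ℝ) ^ 2 = 1 / 2592 := by linarith
  have hηk : η * k ≤ 1 / 5184 := by nlinarith
  have hη1 : η ≤ 1 / 10000 := by nlinarith
  -- lam bounds
  have hl3 : (n : ℝ) / 3 ≤ lam := by
    refine le_of_abs_le (abs_le_of_sq_le_sq ?_ hl.le)
    nlinarith
  have hl4 : (n : ℝ) / 2 - 1 / n ≤ lam := by
    refine le_of_abs_le (abs_le_of_sq_le_sq ?_ hl.le)
    have : ((n : ℝ) / 2 - 1 / n) ^ 2 = n ^ 2 / 4 - 1 + (1 / n) ^ 2 := by field_simp; ring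
    rw [this]
    have h1 : (1 : ℝ) / n ≤ 1 / 2 := by gcongr
    have h2 : (0 : ℝ) ≤ 1 / n := by positivity
    nlinarith
  -- sup bound
  set M := Real.sqrt (9 / n) with hM
  have hM0 : 0 ≤ M := Real.sqrt_nonneg _
  have hM2 : M * M = 9 / n := Real.mul_self_sqrt (by positivity)
  have hM2n : M * M * n = 9 := by rw [hM2]; field_simp
  have hyM : ∀ v, y v ≤ M := by
    intro v
    apply Real.le_sqrt_of_sq_le
    have h1 : lam * y v ≤ ∑ w, y w := (hev v).trans (Finset.sum_le_sum fun w _ => by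
      have := mul_le_mul_of_nonneg_right (ai_le G v w) (hy w); linarith)
    have h2 : (∑ w, y w) ^ 2 ≤ n := by
      have := sq_sum_le_card_mul_sum_sq (s := (Finset.univ : Finset (Fin n))) (f := y)
      rw [hy1, Finset.card_univ, Fintype.card_fin] at this
      linarith
    have h3 : (n : ℝ) / 3 * y v ≤ ∑ w, y w :=
      (mul_le_mul_of_nonneg_right hl3 (hy v)).trans h1
    have h4 : ((n : ℝ) / 3 * y v) ^ 2 ≤ n :=
      (pow_le_pow_left₀ (mul_nonneg (by positivity) (hy v)) h3 2).trans h2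
    rw [le_div_iff₀ hn0]
    have h5 : (y v ^ 2 * n) * n ≤ 9 * n := by nlinarith
    exact le_of_mul_le_mul_right h5 hn0
  have hsumM : ∀ g : Fin n → ℝ, (∀ w, 0 ≤ g w) → ∑ w, g w * y w ≤ (∑ w, g w) * M := by
    intro g hg
    rw [Finset.sum_mul]
    exact Finset.sum_le_sum fun w _ => mul_le_mul_of_nonneg_left (hyM w) (hg w)
  have hh0 : ∀ v w, 0 ≤ ai G v w * (1 - ci S v w) := fun v w =>
    mul_nonneg (ai_nonneg _ _ _) (by linarith [ci_le S v w])
  -- few good neighbours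
  have hfew := few_good G hG S β hβ τ hβ0
  have hkτ : (k : ℝ) + k * τ ≤ 2 * k * η * n := by nlinarith
  -- good vertices have many cross neighbours
  have hgood : ∀ v, β v = 0 → ∑ w, ai G v w * (1 - ci S v w) * (1 - β w) ≤ k - 1 := by
    intro v hv
    apply hfew
    have h1 := hβ0 v hv
    have h2 : ∑ w, ai G v w * ci S v w
        = ∑ w, ci S v w - ∑ w, ci S v w * (1 - ai G v w) := by
      rw [← Finset.sum_sub_distrib]
      exact Finset.sum_congr rfl fun w _ => by ring
    have hX8 : (n : ℝ) ^ 2 / 8 ≤ X := by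
      have hη2 : η ^ 2 ≤ 1 := by nlinarith
      have := mul_le_mul_of_nonneg_right hη2 (sq_nonneg (n : ℝ))
      linarith [sq_nonneg (n : ℝ)]
    have hs0 : (0 : ℝ) ≤ S.card := by positivity
    have hsn : (S.card : ℝ) ≤ n := by
      have := Finset.card_le_univ S
      rw [Fintype.card_fin] at this
      exact_mod_cast this
    have h3 : (n : ℝ) / 8 ≤ ∑ w, ci S v w := by
      have h4 : ∑ w, ci S v w = si S v * (n - S.card) + S.card * (1 - si S v) := by
        unfold ci
        rw [Finset.sum_add_distrib, ← Finset.mul_sum, ← Finset.sum_mul, Finset.sum_sub_distrib,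
          sum_si]
        simp
      rw [h4]
      rcases si_zo S v with h | h <;> rw [h]
      · have : (n : ℝ) / 8 * n ≤ S.card * n := by nlinarith
        have := le_of_mul_le_mul_right this hn0
        linarith
      · have : (n : ℝ) / 8 * n ≤ (n - S.card) * n := by nlinarith
        have := le_of_mul_le_mul_right this hn0
        linarith
    have h5 : η * n * (2 * k + 1) ≤ n / 8 := by
      have h6 : η * (2 * k + 1) ≤ 1 / 8 := by linarith
      have := mul_le_mul_of_nonneg_right h6 hn0.le
      linarith
    rw [h2]
    have : 2 * k * η * n + τ = η * n * (2 * k + 1) := by rw [hτ]; ring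
    linarith
  -- bad vertices
  have hbad : ∀ v, β v = 1 → y v * ∑ w, ai G v w * (1 - ci S v w) * y w ≤ η / 4 := by
    intro v _
    have hin := hsumM (fun w => ai G v w * (1 - ci S v w)) (hh0 v)
    have hin0 : 0 ≤ ∑ w, ai G v w * (1 - ci S v w) * y w :=
      Finset.sum_nonneg fun w _ => mul_nonneg (hh0 v w) (hy w)
    by_cases hv : k + k * τ ≤ ∑ w, ai G v w * ci S v w
    · have h1 := hfew v hv
      have h2 : ∑ w, ai G v w * (1 - ci S v w) ≤ k - 1 + b := by
        have : ∑ w, ai G v w * (1 - ci S v w) ≤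
            ∑ w, (ai G v w * (1 - ci S v w) * (1 - β w) + β w) := by
          refine Finset.sum_le_sum fun w _ => ?_
          have u1 : ai G v w * (1 - ci S v w) ≤ 1 := by
            rcases ai_zo G v w with h | h <;> rcases ci_zo S v w with h' | h' <;> rw [h, h'] <;>
              norm_num
          rcases hβ w with h | h <;> rw [h] <;> linarith
        rw [Finset.sum_add_distrib] at this
        linarith
      calc y v * ∑ w, ai G v w * (1 - ci S v w) * y w
          ≤ M * ((k - 1 + b) * M) := by
            apply mul_le_mul (hyM v) (hin.trans (mul_le_mul_of_nonneg_right h2 hM0)) hin0 hM0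
        _ = (k - 1 + b) * (9 / n) := by rw [← hM2]; ring
        _ ≤ η / 4 := by
            rw [mul_div_assoc', div_le_iff₀ hn0]
            nlinarith
    · push Not at hv
      have hflip := maxcut_flip G S hS v
      set δ := 2 * k * η with hδ
      have hδ0 : 0 ≤ δ := by positivity
      have hout : ∑ w, ai G v w * ci S v w ≤ δ * n := by linarith
      have hinn : ∑ w, ai G v w * (1 - ci S v w) ≤ δ * n := by linarith
      have hdeg : ∑ w, ai G v w ≤ 2 * δ * n := by
        have : ∑ w, ai G v w = ∑ w, ai G v w * ci S v w + ∑ w, ai G v w * (1 - ci S v w) := by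
          rw [← Finset.sum_add_distrib]
          exact Finset.sum_congr rfl fun w _ => by ring
        linarith
      have h1 : (n : ℝ) / 3 * y v ≤ 2 * δ * n * M :=
        (mul_le_mul_of_nonneg_right hl3 (hy v)).trans <| (hev v).trans <|
          (hsumM _ (ai_nonneg G v)).trans (mul_le_mul_of_nonneg_right hdeg hM0)
      have h2 : y v ≤ 6 * δ * M := by
        have : y v * n ≤ 6 * δ * M * n := by linarith
        exact le_of_mul_le_mul_right this hn0
      calc y v * ∑ w, ai G v w * (1 - ci S v w) * y w
          ≤ (6 * δ * M) * (δ * n * M) := by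
            apply mul_le_mul h2 (hin.trans (mul_le_mul_of_nonneg_right hinn hM0)) hin0
            positivity
        _ = 6 * δ ^ 2 * (M * M * n) := by ring
        _ = 216 * (η * k ^ 2) * η := by rw [hM2n, hδ]; ring
        _ ≤ η / 4 := by rw [hηsmall]; linarith
  have hinside := inside_bound (fun v w => ai G v w * (1 - ci S v w)) β y (k - 1) (η / 4)
    (fun v w => by rw [ai_comm, ci_comm]) hh0 (by linarith) hβ hy hgood hbad
  have hcross := cross_bound (by omega) G S y hy1
  have hlam : lam ≤ ∑ v, ∑ w, ai G v w * (y v * y w) := by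
    calc lam = ∑ v, y v * (lam * y v) := by
          have e : ∑ v, y v * (lam * y v) = lam * ∑ v, y v ^ 2 := by
            rw [Finset.mul_sum]
            exact Finset.sum_congr rfl fun v _ => by ring
          rw [e, hy1, mul_one]
      _ ≤ ∑ v, y v * ∑ w, ai G v w * y w :=
          Finset.sum_le_sum fun v _ => mul_le_mul_of_nonneg_left (hev v) (hy v)
      _ = _ := by
          refine Finset.sum_congr rfl fun v _ => ?_
          rw [Finset.mul_sum]
          exact Finset.sum_congr rfl fun w _ => by ring
  have hsplit : ∑ v, ∑ w, ai G v w * (y v * y w) =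
      ∑ v, ∑ w, ai G v w * ci S v w * (y v * y w)
        + ∑ v, ∑ w, ai G v w * (1 - ci S v w) * (y v * y w) := by
    rw [← Finset.sum_add_distrib]
    refine Finset.sum_congr rfl fun v _ => ?_
    rw [← Finset.sum_add_distrib]
    exact Finset.sum_congr rfl fun w _ => by ring
  rw [hy1, ← hb] at hinside
  rw [← hmdef] at hcross
  have hfin : (n : ℝ) / 2 - 1 / n ≤ m / n + n / 4 + (k - 1) + b * η / 2 := by linarith
  have hmul := mul_le_mul_of_nonneg_right hfin hn0.le
  have e1 : ((n : ℝ) / 2 - 1 / n) * n = n ^ 2 / 2 - 1 := by field_simp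
  have e2 : (m / n + n / 4 + (k - 1) + b * η / 2) * n
      = m + n ^ 2 / 4 + (k - 1) * n + b * (η * n) / 2 := by field_simp
  rw [e1, e2] at hmul
  linarith

/-- The two sides of a maximum cut have size `n/2 ± √(3nk/2)`. -/
theorem part_sizes_sqrt (k : ℕ) (hk : 2 ≤ k) :
    ∃ N : ℕ, ∀ n : ℕ, N ≤ n → ∀ G : SimpleGraph (Fin n), IsSpexWheel (2 * k + 1) G →
      ∀ S T : Finset (Fin n), IsMaxCut G S T →
        (n : ℝ) / 2 - Real.sqrt (3 * (n : ℝ) * (k : ℝ) / 2) ≤ (S.card : ℝ) ∧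
        (S.card : ℝ) ≤ (n : ℝ) / 2 + Real.sqrt (3 * (n : ℝ) * (k : ℝ) / 2) ∧
        (n : ℝ) / 2 - Real.sqrt (3 * (n : ℝ) * (k : ℝ) / 2) ≤ (T.card : ℝ) ∧
        (T.card : ℝ) ≤ (n : ℝ) / 2 + Real.sqrt (3 * (n : ℝ) * (k : ℝ) / 2) := by
  obtain ⟨η, hη⟩ : ∃ η : ℝ, η * (2592 * k ^ 2) = 1 :=
    ⟨1 / (2592 * k ^ 2), by
      have : (0 : ℝ) < k := by positivity
      field_simp⟩
  have hk2 : (2 : ℝ) ≤ k := by exact_mod_cast hk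
  have hη0 : 0 < η := by
    by_contra h
    push Not at h
    nlinarith [sq_nonneg (k : ℝ)]
  obtain ⟨N1, hN1⟩ := sparse_nbhd k hk (η ^ 2 / 432) (by positivity)
  obtain ⟨N2, hN2⟩ := exists_nat_ge (108 * k / η + 432 / η ^ 2)
  refine ⟨max (max N1 N2) 2, fun n hn G hG S T hST => ?_⟩
  have hnN1 : N1 ≤ n := le_trans (le_trans (le_max_left _ _) (le_max_left _ _)) hn
  have hnN2 : N2 ≤ n := le_trans (le_trans (le_max_right _ _) (le_max_left _ _)) hn
  have hn2 : 2 ≤ n := le_trans (le_max_right _ _) hn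
  have hnR : (2 : ℝ) ≤ n := by exact_mod_cast hn2
  have hN2n : (N2 : ℝ) ≤ n := by exact_mod_cast hnN2
  have q1 : 0 ≤ 108 * k / η := by positivity
  have q2 : 0 ≤ 432 / η ^ 2 := by positivity
  have hnη : 108 * k ≤ η * n := by
    have : 108 * k / η ≤ n := by linarith
    rwa [div_le_iff₀' hη0] at this
  have hnη2 : 432 ≤ η ^ 2 * n := by
    have : 432 / η ^ 2 ≤ n := by linarith
    rwa [div_le_iff₀' (by positivity)] at this
  obtain ⟨hT, hS⟩ := hST
  obtain ⟨lam, y, hl, hl2, hy, hy1, hev⟩ := spectral_input hk hn2 G hG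
  have hev' : ∀ v, lam * y v ≤ ∑ w, ai G v w * y w := by
    intro v
    refine (hev v).trans (le_of_eq (Finset.sum_congr rfl fun w _ => ?_))
    unfold ai
    rfl
  obtain ⟨u, A, hA, hcut⟩ := big_cut (by omega) G lam y hl hy hy1 hev'
  have hsp := hN1 n hnN1 G hG.1 u A hA
  have hmA : (cutCount G A : ℝ) ≤ cutCount G S := by exact_mod_cast hS A
  have hcore := core hk hn2 η hη hnη G hG.1 S hS (by nlinarith) lam y hl hl2 hy hy1 hev'
  have hD : ((n : ℝ) / 2 - S.card) ^ 2 ≤ 3 * (n : ℝ) * (k : ℝ) / 2 := by nlinarith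
  have habs := Real.abs_le_sqrt hD
  rw [abs_le] at habs
  have hTc : (T.card : ℝ) = n - S.card := by
    rw [hT, Finset.card_compl, Fintype.card_fin, Nat.cast_sub]
    have := Finset.card_le_univ S
    rwa [Fintype.card_fin] at this
  rw [hTc]
  refine ⟨?_, ?_, ?_, ?_⟩ <;> linarith [habs.1, habs.2]
end
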